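/- Let X and Y be metric spaces satisfying assumptions (A), let Ω ⊊ X be a bounded domain satisfying the bounded turning condition, and let Ω' ⊊ Y be a bounded domain that is finitely connected at the boundary. Then every homeomorphism f ∈ F(Ω, Ω') extends to a continuous mapping F : closure(Ω) → closure(Ω'), and moreover Ω' ∪ ⋃_{x ∈ ∂Ω} C(f,x) = closure(Ω'). -/

import Mathlib

open Set Metric Filter Bornology
open scoped ENNReal Topology

noncomputable section

/-- A metric space is doubling if there is `N` such that every ball of radius `r`
can be covered by at most `N` balls of radius `r/2`. -/
def DoublingSpace (X : Type*) [MetricSpace X] : Prop :=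
  ∃ N : ℕ, ∀ (x : X) (r : ℝ), ∃ t : Finset X,
    t.card ≤ N ∧ Metric.ball x r ⊆ ⋃ y ∈ t, Metric.ball y (r / 2)

/-- A metric space is quasiconvex if there is `C ≥ 1` such that any two points are
joined by a rectifiable curve of length at most `C · d(x,y)`. -/
def QuasiconvexSpace (X : Type*) [MetricSpace X] : Prop :=
  ∃ C : ℝ, 1 ≤ C ∧ ∀ x y : X, ∃ γ : ℝ → X,
    ContinuousOn γ (Set.Icc 0 1) ∧ γ 0 = x ∧ γ 1 = y ∧
    eVariationOn γ (Set.Icc 0 1) ≤ ENNReal.ofReal (C * dist x y)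

/-- Assumptions (A): complete, doubling and quasiconvex. -/
def AssumptionsA (X : Type*) [MetricSpace X] : Prop :=
  CompleteSpace X ∧ DoublingSpace X ∧ QuasiconvexSpace X

/-- A domain: a nonempty open connected subset. -/
def IsDomainIn {X : Type*} [MetricSpace X] (Ω : Set X) : Prop :=
  IsOpen Ω ∧ IsConnected Ω

/-- The inner diameter distance `dist_{M'}` between `E, F ⊆ Ω`: the infimum of diameters of
rectifiable curves in `Ω` joining `E` and `F` (the infimum of the empty set being `∞`). -/
def innerDiamDist {X : Type*} [MetricSpace X] (Ω E F : Set X) : ℝ≥0∞ :=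
  ⨅ (γ : ℝ → X) (_ : ContinuousOn γ (Set.Icc 0 1) ∧ γ '' Set.Icc 0 1 ⊆ Ω ∧
      eVariationOn γ (Set.Icc 0 1) < ⊤ ∧ γ 0 ∈ E ∧ γ 1 ∈ F),
    EMetric.diam (γ '' Set.Icc 0 1)

/-- The Mazurkiewicz distance `dist_M` between `A, B ⊆ Ω`: the infimum of diameters of
connected subsets of `Ω` meeting both `A` and `B`. -/
def mazDist {X : Type*} [MetricSpace X] (Ω A B : Set X) : ℝ≥0∞ :=
  ⨅ (K : Set X) (_ : K ⊆ Ω ∧ IsConnected K ∧ (K ∩ A).Nonempty ∧ (K ∩ B).Nonempty),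
    EMetric.diam K

/-- An acceptable set in a bounded domain `Ω`: a bounded connected proper subset of `Ω`
whose closure meets `∂Ω`. -/
def AcceptableIn {X : Type*} [MetricSpace X] (Ω E : Set X) : Prop :=
  Bornology.IsBounded E ∧ IsConnected E ∧ E ⊆ Ω ∧ E ≠ Ω ∧
    (closure E ∩ frontier Ω).Nonempty

/-- A chain in `Ω`. -/
def IsChainIn {X : Type*} [MetricSpace X] (Ω : Set X) (E : ℕ → Set X) : Prop :=
  (∀ k, AcceptableIn Ω (E k)) ∧
  (∀ k, E (k + 1) ⊆ E k) ∧
  (∀ k, 0 < mazDist Ω (Ω ∩ frontier (E (k + 1))) (Ω ∩ frontier (E k))) ∧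
  (⋂ k, closure (E k)) ⊆ frontier Ω

/-- The impression of a chain. -/
def impression {X : Type*} [MetricSpace X] (E : ℕ → Set X) : Set X :=
  ⋂ k, closure (E k)

/-- A chain `E` divides a chain `F` if every member of `F` contains some member of `E`. -/
def ChainDivides {X : Type*} (E F : ℕ → Set X) : Prop :=
  ∀ k, ∃ l, E l ⊆ F k

/-- Two chains are equivalent if they divide each other. -/
def ChainEquiv {X : Type*} (E F : ℕ → Set X) : Prop :=
  ChainDivides E F ∧ ChainDivides F E

/-- A chain represents a prime end if every chain dividing it is equivalent to it. -/
def IsPrimeChain {X : Type*} [MetricSpace X] (Ω : Set X) (E : ℕ → Set X) : Prop :=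
  IsChainIn Ω E ∧ ∀ F : ℕ → Set X, IsChainIn Ω F → ChainDivides F E → ChainDivides E F

/-- A chain represents a singleton prime end if moreover its impression is a single point. -/
def IsSingletonPrimeChain {X : Type*} [MetricSpace X] (Ω : Set X) (E : ℕ → Set X) : Prop :=
  IsPrimeChain Ω E ∧ ∃ x : X, impression E = {x}

/-- The bounded turning condition (linear connectedness): any two distinct points of `Ω` lie in a
continuum contained in `Ω` of diameter at most `L` times their distance. -/
def BoundedTurning {X : Type*} [MetricSpace X] (Ω : Set X) : Prop :=
  ∃ L : ℝ, 1 ≤ L ∧ ∀ x ∈ Ω, ∀ y ∈ Ω, x ≠ y → ∃ K : Set X,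
    K ⊆ Ω ∧ IsCompact K ∧ IsConnected K ∧ K.Nontrivial ∧ x ∈ K ∧ y ∈ K ∧
    Metric.diam K ≤ L * dist x y

/-- `Ω` is finitely connected at a boundary point `x`. -/
def FinitelyConnectedAt {X : Type*} [MetricSpace X] (Ω : Set X) (x : X) : Prop :=
  ∀ r : ℝ, 0 < r → ∃ U : Set X, IsOpen U ∧ Bornology.IsBounded U ∧ x ∈ U ∧
    U ⊆ Metric.ball x r ∧
    {C : Set X | ∃ y ∈ U ∩ Ω, C = connectedComponentIn (U ∩ Ω) y}.Finite

/-- `Ω` is finitely connected at the boundary. -/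
def FinitelyConnectedAtBoundary {X : Type*} [MetricSpace X] (Ω : Set X) : Prop :=
  ∀ x ∈ frontier Ω, FinitelyConnectedAt Ω x

/-- `Ω` is locally connected at a boundary point `x`. -/
def LocallyConnectedAt {X : Type*} [MetricSpace X] (Ω : Set X) (x : X) : Prop :=
  ∀ r : ℝ, 0 < r → ∃ U : Set X, IsOpen U ∧ Bornology.IsBounded U ∧ x ∈ U ∧
    U ⊆ Metric.ball x r ∧ IsConnected (U ∩ Ω)

/-- `Ω` is locally connected at the boundary. -/
def LocallyConnectedAtBoundary {X : Type*} [MetricSpace X] (Ω : Set X) : Prop :=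
  ∀ x ∈ frontier Ω, LocallyConnectedAt Ω x

/-- `f` is a homeomorphism of `Ω` onto `Ω'` with inverse `g`. -/
def IsHomeoBetween {X Y : Type*} [MetricSpace X] [MetricSpace Y] (f : X → Y) (g : Y → X)
    (Ω : Set X) (Ω' : Set Y) : Prop :=
  ContinuousOn f Ω ∧ ContinuousOn g Ω' ∧ Set.MapsTo f Ω Ω' ∧ Set.MapsTo g Ω' Ω ∧
  (∀ x ∈ Ω, g (f x) = x) ∧ (∀ y ∈ Ω', f (g y) = y)

/-- The class `F(Ω, Ω')`: homeomorphisms such that for all connected `E, F ⊊ Ω`,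
`dist_{M'}(E,F) = 0` iff `dist_{M'}(f(E), f(F)) = 0`. -/
def ClassF {X Y : Type*} [MetricSpace X] [MetricSpace Y] (Ω : Set X) (Ω' : Set Y)
    (f : X → Y) (g : Y → X) : Prop :=
  IsHomeoBetween f g Ω Ω' ∧
  ∀ E F : Set X, E ⊆ Ω → E ≠ Ω → IsConnected E → F ⊆ Ω → F ≠ Ω → IsConnected F →
    (innerDiamDist Ω E F = 0 ↔ innerDiamDist Ω' (f '' E) (f '' F) = 0)

/-- The cluster set `C(f, x)` of `f : Ω → Y` at `x`. -/
def clusterSetOn {X Y : Type*} [MetricSpace X] [MetricSpace Y] (f : X → Y) (Ω : Set X)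
    (x : X) : Set Y :=
  ⋂ U ∈ 𝓝 x, closure (f '' (U ∩ Ω))


theorem aux_cover {X : Type*} [MetricSpace X] (h : DoublingSpace X) (x : X) (r : ℝ) (n : ℕ) :
    ∃ t : Set X, t.Finite ∧ ball x r ⊆ ⋃ y ∈ t, ball y (r / 2 ^ n) := by
  obtain ⟨N, hN⟩ := h
  induction n with
  | zero => exact ⟨{x}, finite_singleton x, by simp⟩
  | succ n ih =>
    obtain ⟨t, ht, hc⟩ := ih
    choose s _ hs' using fun y : X => hN y (r / 2 ^ n)
    refine ⟨⋃ y ∈ t, (s y : Set X), ht.biUnion fun y _ => (s y).finite_toSet, ?_⟩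
    intro z hz
    obtain ⟨y, hy, hzy⟩ := mem_iUnion₂.1 (hc hz)
    obtain ⟨w, hw, hzw⟩ := mem_iUnion₂.1 (hs' y hzy)
    refine mem_iUnion₂.2 ⟨w, mem_iUnion₂.2 ⟨y, hy, hw⟩, ?_⟩
    rwa [pow_succ, ← div_div]

theorem aux_compact {X : Type*} [MetricSpace X] (h : AssumptionsA X) {s : Set X}
    (hs : IsBounded s) : IsCompact (closure s) := by
  obtain ⟨hc, hd, _⟩ := h
  rcases s.eq_empty_or_nonempty with rfl | ⟨x, _⟩
  · simp
  obtain ⟨r, hr0, hr⟩ := hs.subset_ball_lt 0 x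
  have htb : TotallyBounded s := by
    rw [Metric.totallyBounded_iff]
    intro ε hε
    obtain ⟨n, hn⟩ := pow_unbounded_of_one_lt (r / ε) (one_lt_two)
    obtain ⟨t, ht, hcov⟩ := aux_cover hd x r n
    refine ⟨t, ht, (hr.trans hcov).trans ?_⟩
    refine iUnion₂_mono fun y _ => ball_subset_ball ?_
    rw [div_lt_iff₀ hε] at hn
    rw [div_le_iff₀ (by positivity)]
    linarith
  exact htb.closure.isCompact_of_isClosed isClosed_closure

/-- Rectifiable joinability in `T`. -/
def RJ {X : Type*} [MetricSpace X] (T : Set X) (p q : X) : Prop :=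
  ∃ γ : ℝ → X, ContinuousOn γ (Icc 0 1) ∧ γ '' Icc 0 1 ⊆ T ∧
    eVariationOn γ (Icc 0 1) < ⊤ ∧ γ 0 = p ∧ γ 1 = q

theorem RJ.trans {X : Type*} [MetricSpace X] {T : Set X} {p q r : X}
    (h1 : RJ T p q) (h2 : RJ T q r) : RJ T p r := by
  obtain ⟨a, ac, aT, av, a0, a1⟩ := h1
  obtain ⟨b, bc, bT, bv, b0, b1⟩ := h2
  let c : ℝ → X := fun t => if t ≤ 1 / 2 then a (2 * t) else b (2 * t - 1)
  have e1 : EqOn c (a ∘ fun t => 2 * t) (Icc 0 (1 / 2)) := by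
    intro t ht
    simp only [c, if_pos ht.2, Function.comp]
  have e2 : EqOn c (b ∘ fun t => 2 * t - 1) (Icc (1 / 2) 1) := by
    intro t ht
    rcases eq_or_lt_of_le ht.1 with h | h
    · subst h
      simp [c, a1, b0]
    · simp only [c, if_neg (not_le.2 h), Function.comp]
  have m1 : MapsTo (fun t : ℝ => 2 * t) (Icc 0 (1 / 2)) (Icc 0 1) := by
    intro t ht
    constructor <;> linarith [ht.1, ht.2]
  have m2 : MapsTo (fun t : ℝ => 2 * t - 1) (Icc (1 / 2) 1) (Icc 0 1) := by
    intro t ht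
    constructor <;> linarith [ht.1, ht.2]
  have hu : Icc (0 : ℝ) (1 / 2) ∪ Icc (1 / 2) 1 = Icc 0 1 :=
    Icc_union_Icc_eq_Icc (by norm_num) (by norm_num)
  refine ⟨c, ?_, ?_, ?_, ?_, ?_⟩
  · rw [← hu]
    refine ContinuousOn.union_of_isClosed ?_ ?_ isClosed_Icc isClosed_Icc
    · exact (ac.comp (by fun_prop) m1).congr e1
    · exact (bc.comp (by fun_prop) m2).congr e2
  · rw [← hu, image_union, e1.image_eq, e2.image_eq, image_comp, image_comp]
    exact union_subset ((image_mono m1.image_subset).trans aT)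
      ((image_mono m2.image_subset).trans bT)
  · rw [← hu, eVariationOn.union c (x := 1 / 2) (isGreatest_Icc (by norm_num))
      (isLeast_Icc (by norm_num)), eVariationOn.congr e1, eVariationOn.congr e2]
    refine ENNReal.add_lt_top.2 ⟨lt_of_le_of_lt ?_ av, lt_of_le_of_lt ?_ bv⟩
    · exact eVariationOn.comp_le_of_monotoneOn _ _ (fun x _ y _ h => by linarith) m1
    · exact eVariationOn.comp_le_of_monotoneOn _ _ (fun x _ y _ h => by linarith) m2
  · simp [c, a0]
  · have : ¬ ((1 : ℝ) ≤ 1 / 2) := by norm_num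
    simp only [c, if_neg this]
    norm_num [b1]

theorem aux_RJ {X : Type*} [MetricSpace X] (h : QuasiconvexSpace X) {K : Set X}
    (hK : IsPreconnected K) {δ : ℝ} (hδ : 0 < δ) {x y : X} (hx : x ∈ K) (hy : y ∈ K) :
    RJ (thickening δ K) x y := by
  obtain ⟨C, hC, hq⟩ := h
  have hC0 : 0 < C := by linarith
  have key : ∀ p q o : X, o ∈ K → (o = p ∨ o = q) → dist p q < δ / C →
      RJ (thickening δ K) p q := by
    intro p q o ho hopq hd
    obtain ⟨γ, γc, γ0, γ1, γv⟩ := hq p q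
    refine ⟨γ, γc, ?_, lt_of_le_of_lt γv ENNReal.ofReal_lt_top, γ0, γ1⟩
    rintro _ ⟨t, ht, rfl⟩
    rw [lt_div_iff₀ hC0] at hd
    have hs : ∃ s ∈ Icc (0 : ℝ) 1, γ s = o := by
      rcases hopq with rfl | rfl
      · exact ⟨0, by simp, γ0⟩
      · exact ⟨1, by simp, γ1⟩
    obtain ⟨s, hs, rfl⟩ := hs
    refine mem_thickening_iff.2 ⟨_, ho, ?_⟩
    have h1 := (eVariationOn.edist_le γ ht hs).trans γv
    rw [edist_dist, ENNReal.ofReal_le_ofReal_iff (by positivity)] at h1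
    linarith
  refine hK.induction₂' (RJ (thickening δ K)) ?_ (fun _ _ _ _ _ _ => RJ.trans) hx hy
  intro p hp
  filter_upwards [mem_nhdsWithin_of_mem_nhds (ball_mem_nhds p (show 0 < δ / C by positivity))]
    with q hq
  rw [mem_ball] at hq
  exact ⟨key p q p hp (Or.inl rfl) (by rwa [dist_comm]), key q p p hp (Or.inr rfl) hq⟩

theorem aux_dist {X : Type*} [MetricSpace X] (h : QuasiconvexSpace X) {Ω : Set X}
    (hO : IsOpen Ω) {K : Set X} (hKΩ : K ⊆ Ω) (hKc : IsCompact K)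
    (hK : IsPreconnected K) {E F : Set X} {δ : ℝ} (hδ : 0 < δ) {x y : X} (hx : x ∈ K) (hy : y ∈ K)
    (hxE : x ∈ E) (hyF : y ∈ F) :
    innerDiamDist Ω E F ≤ ENNReal.ofReal (2 * (diam K + δ)) := by
  obtain ⟨η, hη, hηΩ⟩ := hKc.exists_thickening_subset_open hO hKΩ
  obtain ⟨γ, γc, γT, γv, γ0, γ1⟩ := aux_RJ h hK (lt_min hδ hη) hx hy
  refine (iInf₂_le γ ⟨γc, γT.trans ((thickening_mono (min_le_right _ _) _).trans hηΩ), γv,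
    γ0 ▸ hxE, γ1 ▸ hyF⟩).trans ?_
  refine Metric.ediam_le fun a ha b hb => ?_
  have hB : ∀ a ∈ γ '' Icc 0 1, dist a x ≤ diam K + δ := by
    intro a ha
    obtain ⟨k, hk, hak⟩ := mem_thickening_iff.1 (γT ha)
    have := dist_le_diam_of_mem hKc.isBounded hk hx
    have := min_le_left δ η
    linarith [dist_triangle a k x]
  rw [edist_dist]
  refine ENNReal.ofReal_le_ofReal ?_
  linarith [dist_triangle_right a b x, hB a ha, hB b hb]

theorem aux_comp {X Y : Type*} [MetricSpace X] [MetricSpace Y] {Ω : Set X} {Ω' : Set Y}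
    {f : X → Y} (hm : MapsTo f Ω Ω') {x : X} {a : Y} (hfc : FinitelyConnectedAt Ω' a)
    (ha : MapClusterPt a (𝓝[Ω] x) f) {r : ℝ} (hr : 0 < r) :
    ∃ E : Set Y, IsPreconnected E ∧ E ⊆ Ω' ∧ E ⊆ ball a r ∧ ∃ᶠ z in 𝓝[Ω] x, f z ∈ E := by
  obtain ⟨U, hUo, -, haU, hUr, hfin⟩ := hfc r hr
  have h1 : ∃ᶠ z in 𝓝[Ω] x, f z ∈ U := ha.frequently (hUo.mem_nhds haU)
  by_contra hcon
  push Not at hcon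
  have h2 : ∀ C ∈ {C : Set Y | ∃ y ∈ U ∩ Ω', C = connectedComponentIn (U ∩ Ω') y},
      ∀ᶠ z in 𝓝[Ω] x, f z ∉ C := by
    rintro C ⟨y, hy, rfl⟩
    have hs := connectedComponentIn_subset (U ∩ Ω') y
    have := hcon _ isPreconnected_connectedComponentIn (hs.trans inter_subset_right)
      ((hs.trans inter_subset_left).trans hUr)
    simpa using this
  refine h1 ?_
  filter_upwards [(eventually_all_finite hfin).2 h2, self_mem_nhdsWithin] with z hz hzΩ hzU
  exact hz _ ⟨f z, ⟨hzU, hm hzΩ⟩, rfl⟩ (mem_connectedComponentIn ⟨hzU, hm hzΩ⟩)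

/-- A cluster value at a boundary point is not inside the target. -/
theorem aux_bdry {X Y : Type*} [MetricSpace X] [MetricSpace Y] {Ω : Set X} {Ω' : Set Y}
    {f : X → Y} {g : Y → X} (hO' : IsOpen Ω') (hg : ContinuousOn g Ω') (hgm : MapsTo g Ω' Ω)
    (hgf : ∀ x ∈ Ω, g (f x) = x) {x : X} (hx : x ∉ Ω) {a : Y}
    (ha : MapClusterPt a (𝓝[Ω] x) f) : a ∉ Ω' := by
  intro haΩ
  have h1 := ha.continuousAt_comp (hg.continuousAt (hO'.mem_nhds haΩ))
  have h2 : g ∘ f =ᶠ[𝓝[Ω] x] id := by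
    filter_upwards [self_mem_nhdsWithin] with z hz using hgf z hz
  rw [h2.mapClusterPt_iff, mapClusterPt_id_iff] at h1
  have h3 : ClusterPt (g a) (𝓝 x) := h1.mono nhdsWithin_le_nhds
  have h4 : g a = x := by
    by_contra hne
    exact h3.ne (disjoint_nhds_nhds.2 hne).eq_bot
  exact hx (h4 ▸ hgm haΩ)

theorem aux_unique {X Y : Type*} [MetricSpace X] [MetricSpace Y]
    (hX : QuasiconvexSpace X)
    (Ω : Set X) (hO : IsOpen Ω) (hΩbt : BoundedTurning Ω)
    (Ω' : Set Y) 
    (f : X → Y) (g : Y → X) (hf : ClassF Ω Ω' f g) {x : X} {a b : Y}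
    (hfa : FinitelyConnectedAt Ω' a) (hfb : FinitelyConnectedAt Ω' b)
    (ha : MapClusterPt a (𝓝[Ω] x) f) (hb : MapClusterPt b (𝓝[Ω] x) f) : a = b := by
  by_contra hab
  obtain ⟨⟨fc, gc, fm, gm, gf, fg⟩, hF⟩ := hf
  have hd : 0 < dist a b := dist_pos.2 hab
  obtain ⟨E, Ec, EΩ, Er, Ef⟩ := aux_comp fm hfa ha (show 0 < dist a b / 3 by positivity)
  obtain ⟨F, Fc, FΩ, Fr, Ff⟩ := aux_comp fm hfb hb (show 0 < dist a b / 3 by positivity)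
  have hsep : ∀ u ∈ E, ∀ v ∈ F, dist a b / 3 ≤ dist u v := by
    intro u hu v hv
    have h1 := mem_ball'.1 (Er hu)
    have h2 := mem_ball.1 (Fr hv)
    linarith [dist_triangle4 a u v b]
  have hdisj : ∀ u ∈ E, u ∉ F := by
    intro u hu hv
    have := hsep u hu u hv
    rw [dist_self] at this
    linarith
  have img : ∀ S ⊆ Ω', f '' (g '' S) = S := by
    intro S hS
    rw [← image_comp]
    have : EqOn (f ∘ g) id S := fun y hy => fg y (hS hy)
    rw [this.image_eq, image_id]
  obtain ⟨z, hzE, hzΩ⟩ := (Ef.and_eventually self_mem_nhdsWithin).exists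
  obtain ⟨w, hwF, hwΩ⟩ := (Ff.and_eventually self_mem_nhdsWithin).exists
  have hEF := hF (g '' E) (g '' F) ((image_mono EΩ).trans gm.image_subset) 
    (by
      intro h
      have hw : w ∈ g '' E := h ▸ hwΩ
      have := mem_image_of_mem f hw
      rw [img E EΩ] at this
      exact hdisj _ this hwF)
    ⟨⟨_, mem_image_of_mem g hzE⟩, Ec.image g (gc.mono EΩ)⟩
    ((image_mono FΩ).trans gm.image_subset) 
    (by
      intro h
      have hw : z ∈ g '' F := h ▸ hzΩ
      have := mem_image_of_mem f hw
      rw [img F FΩ] at this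
      exact hdisj _ hzE this)
    ⟨⟨_, mem_image_of_mem g hwF⟩, Fc.image g (gc.mono FΩ)⟩
  rw [img E EΩ, img F FΩ] at hEF
  have h0 : innerDiamDist Ω (g '' E) (g '' F) = 0 := by
    obtain ⟨L, hL, hbt⟩ := hΩbt
    have hL0 : 0 < L := by linarith
    refine le_antisymm (ENNReal.le_of_forall_pos_le_add fun ε hε _ => ?_) bot_le
    rw [zero_add]
    have hε' : (0 : ℝ) < ε := hε
    have hs : 0 < (ε : ℝ) / (8 * L) := by positivity
    have hball : ∀ᶠ z in 𝓝[Ω] x, z ∈ Ω ∧ z ∈ ball x ((ε : ℝ) / (8 * L)) :=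
      Filter.Eventually.and self_mem_nhdsWithin (mem_nhdsWithin_of_mem_nhds (ball_mem_nhds x hs))
    obtain ⟨z, hzE, hzΩ, hzb⟩ := (Ef.and_eventually hball).exists
    obtain ⟨w, hwF, hwΩ, hwb⟩ := (Ff.and_eventually hball).exists
    have hzw : z ≠ w := by
      rintro rfl
      exact hdisj _ hzE hwF
    obtain ⟨K, KΩ, Kc, Kcn, -, hzK, hwK, hdK⟩ := hbt z hzΩ w hwΩ hzw
    have := aux_dist hX hO KΩ Kc Kcn.isPreconnected (E := g '' E) (F := g '' F)
      (show (0 : ℝ) < ε / 4 by positivity) hzK hwK ⟨f z, hzE, gf z hzΩ⟩ ⟨f w, hwF, gf w hwΩ⟩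
    refine this.trans ?_
    rw [← ENNReal.ofReal_coe_nnreal]
    refine ENNReal.ofReal_le_ofReal ?_
    have h1 : dist z w ≤ 2 * ((ε : ℝ) / (8 * L)) := by
      have h2 := mem_ball.1 hzb
      have h3 := mem_ball.1 hwb
      linarith [dist_triangle_right z w x]
    have h2 : L * dist z w ≤ ε / 4 := by
      calc L * dist z w ≤ L * (2 * ((ε : ℝ) / (8 * L))) := by gcongr
        _ = ε / 4 := by field_simp; norm_num
    linarith
  have h1 := hEF.1 h0
  have h2 : ENNReal.ofReal (dist a b / 3) ≤ innerDiamDist Ω' E F := by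
    refine le_iInf₂ fun γ hγ => ?_
    obtain ⟨-, -, -, g0, g1⟩ := hγ
    refine le_trans ?_ (Metric.edist_le_ediam_of_mem (mem_image_of_mem γ (by simp : (0 : ℝ) ∈ Icc (0 : ℝ) 1))
      (mem_image_of_mem γ (by simp : (1 : ℝ) ∈ Icc (0 : ℝ) 1)))
    rw [edist_dist]
    exact ENNReal.ofReal_le_ofReal (hsep _ g0 _ g1)
  rw [h1] at h2
  have := ENNReal.ofReal_eq_zero.1 (le_antisymm h2 bot_le)
  linarith

/-- if `Ω` is of bounded turning and `Ω'` is finitely connected at the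
boundary, then every `f ∈ F(Ω, Ω')` extends continuously to `F : closure Ω → closure Ω'`,
and `Ω' ∪ ⋃_{x ∈ ∂Ω} C(f,x) = closure Ω'`. -/
theorem statement_8 {X Y : Type*} [MetricSpace X] [MetricSpace Y]
    (hX : AssumptionsA X) (hY : AssumptionsA Y)
    (Ω : Set X) (hΩdom : IsDomainIn Ω) (hΩbdd : Bornology.IsBounded Ω)
    (hΩne : Ω ≠ Set.univ) (hΩbt : BoundedTurning Ω)
    (Ω' : Set Y) (hΩ'dom : IsDomainIn Ω') (hΩ'bdd : Bornology.IsBounded Ω')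
    (hΩ'ne : Ω' ≠ Set.univ) (hΩ'fc : FinitelyConnectedAtBoundary Ω')
    (f : X → Y) (g : Y → X) (hf : ClassF Ω Ω' f g) :
    (∃ F : X → Y, ContinuousOn F (closure Ω) ∧ Set.EqOn F f Ω ∧
      Set.MapsTo F (closure Ω) (closure Ω')) ∧
    (Ω' ∪ ⋃ x ∈ frontier Ω, clusterSetOn f Ω x) = closure Ω' := by
  have hf0 := hf
  obtain ⟨⟨fc, gc, fm, gm, gf, fg⟩, -⟩ := hf
  have hcX := aux_compact hX hΩbdd
  have hcY := aux_compact hY hΩ'bdd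
  have hO := hΩdom.1
  have hO' := hΩ'dom.1
  have hlim : ∀ x ∈ closure Ω, ∃ y, Tendsto f (𝓝[Ω] x) (𝓝 y) := by
    intro x hx
    by_cases hxΩ : x ∈ Ω
    · exact ⟨f x, fc x hxΩ⟩
    haveI : (𝓝[Ω] x).NeBot := mem_closure_iff_nhdsWithin_neBot.1 hx
    have hev : ∀ᶠ z in 𝓝[Ω] x, f z ∈ closure Ω' := by
      filter_upwards [self_mem_nhdsWithin] with z hz using subset_closure (fm hz)
    have hfr : ∀ y ∈ closure Ω', MapClusterPt y (𝓝[Ω] x) f → FinitelyConnectedAt Ω' y := by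
      intro y hy hyc
      refine hΩ'fc y ?_
      rw [hO'.frontier_eq]
      exact ⟨hy, aux_bdry hO' gc gm gf hxΩ hyc⟩
    obtain ⟨y, hy, hyc⟩ := hcY (f := map f (𝓝[Ω] x)) (le_principal_iff.2 hev)
    refine ⟨y, hcY.tendsto_nhds_of_unique_mapClusterPt hev fun y' hy' hyc' => ?_⟩
    exact aux_unique hX.2.2 Ω hO hΩbt Ω' f g hf0 (hfr y' hy' hyc') (hfr y hy hyc) hyc' hyc
  refine ⟨⟨extendFrom Ω f, continuousOn_extendFrom subset_rfl hlim, extendFrom_extends fc, ?_⟩, ?_⟩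
  · intro x hx
    obtain ⟨y, hy⟩ := hlim x hx
    rw [extendFrom_eq hx hy]
    haveI : (𝓝[Ω] x).NeBot := mem_closure_iff_nhdsWithin_neBot.1 hx
    refine mem_closure_of_tendsto hy ?_
    filter_upwards [self_mem_nhdsWithin] with z hz using fm hz
  · apply subset_antisymm
    · refine union_subset subset_closure (iUnion₂_subset fun x _ => ?_)
      refine (iInter₂_subset univ univ_mem).trans (closure_mono ?_)
      rw [univ_inter]
      exact fm.image_subset
    · intro y hy
      by_cases hyΩ : y ∈ Ω'
      · exact Or.inl hyΩ
      right
      haveI : (𝓝[Ω'] y).NeBot := mem_closure_iff_nhdsWithin_neBot.1 hy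
      have hev : ∀ᶠ z in 𝓝[Ω'] y, g z ∈ closure Ω := by
        filter_upwards [self_mem_nhdsWithin] with z hz using subset_closure (gm hz)
      obtain ⟨x, hx, hxc⟩ := hcX (f := map g (𝓝[Ω'] y)) (le_principal_iff.2 hev)
      have hxΩ : x ∉ Ω := aux_bdry hO fc fm fg hyΩ hxc
      refine mem_iUnion₂.2 ⟨x, by rw [hO.frontier_eq]; exact ⟨hx, hxΩ⟩, ?_⟩
      refine mem_iInter₂.2 fun U hU => ?_
      rw [mem_closure_iff_nhds]
      intro V hV
      have hxc' : MapClusterPt x (𝓝[Ω'] y) g := hxc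
      obtain ⟨z, hzU, hzΩ, hzV⟩ := ((hxc'.frequently hU).and_eventually
        (Filter.Eventually.and (p := (· ∈ Ω')) (q := (· ∈ V)) self_mem_nhdsWithin (mem_nhdsWithin_of_mem_nhds hV))).exists
      exact ⟨z, hzV, g z, ⟨hzU, gm hzΩ⟩, fg z hzΩ⟩
end
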